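/- Let ℏ>0, m>0, σ₀>0, α∈ℝ\{0}, and β := 2α/ℏ. For every t∈ℝ, x∈ℝ, and ξ=(q,p)∈ℝ² with q·p≠0: e^{(i/ℏ)A_t}·(e^{itL_β}φ^ℏ_{σ_t,x})(ξ) = U₀(t)ψ^ℏ_{σ₀,ξ}(x) + θ(−qp)·θ(t + mq/p)·R₋(p/ℏ)·( U₀(t)ψ^ℏ_{σ₀,ξ}(x) + U₀(t)ψ^ℏ_{σ₀,ξ}(−x) ) + θ(qp)·θ(−t − mq/p)·R₊(p/ℏ)·( U₀(t)ψ^ℏ_{σ₀,ξ}(x) + U₀(t)ψ^ℏ_{σ₀,ξ}(−x) ), where U₀(t)ψ^ℏ_{σ₀,ξ}(x) := e^{(i/ℏ)A_t}·ψ^ℏ(σ_t, σ₀⁻¹, q+pt/m, p; x) denotes the free quantum evolution of the coherent state. -/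

import Mathlib

open MeasureTheory Complex Filter

noncomputable section

/-- Heaviside step function: `1` for positive arguments, `0` otherwise. -/
def heav (x : ℝ) : ℝ := if 0 < x then 1 else 0

/-- Gaussian coherent state `ψ^ℏ(σ,σ̆,q,p;x)`. -/
def coh (ℏ : ℝ) (σ σ' : ℂ) (q p x : ℝ) : ℂ :=
  ((2 * Real.pi * ℏ : ℝ) : ℂ) ^ (-(1/4 : ℂ)) * σ ^ (-(1/2 : ℂ)) *
    Complex.exp (-(σ' * ((x : ℂ) - (q : ℂ)) ^ 2) / (4 * (ℏ : ℂ) * σ) +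
      Complex.I * (p : ℂ) * ((x : ℂ) - (q : ℂ)) / (ℏ : ℂ))

/-- Fourier transform `ψ̂(k) = (2π)^{-1/2} ∫ e^{-ikx} ψ(x) dx`. -/
def ft (ψ : ℝ → ℂ) (k : ℝ) : ℂ :=
  (((Real.sqrt (2 * Real.pi))⁻¹ : ℝ) : ℂ) *
    ∫ x : ℝ, Complex.exp (-(Complex.I) * (k : ℂ) * (x : ℂ)) * ψ x

/-- Reflection coefficients `R_±(k) = -(1 ± iℏ²|k|/(mα))⁻¹`; `s = ±1`. -/
def Rpm (ℏ m α s k : ℝ) : ℂ :=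
  -(1 + (s : ℂ) * Complex.I * (ℏ : ℂ) ^ 2 * ((|k| : ℝ) : ℂ) / ((m : ℂ) * (α : ℂ)))⁻¹

/-- Generalized eigenfunctions `φ_k⁺(x)`. -/
def phiP (ℏ m α k x : ℝ) : ℂ :=
  (((Real.sqrt (2 * Real.pi))⁻¹ : ℝ) : ℂ) *
    (Complex.exp (Complex.I * (k : ℂ) * (x : ℂ)) +
      Rpm ℏ m α 1 k * Complex.exp (-(Complex.I) * ((|k| : ℝ) : ℂ) * ((|x| : ℝ) : ℂ)))

/-- Bound state `φ_α` of the delta interaction (for `α < 0`). -/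
def phiB (ℏ m α x : ℝ) : ℂ :=
  ((Real.sqrt (m * |α|) / ℏ : ℝ) : ℂ) * Complex.exp (((-(m * |α| * |x|) / ℏ ^ 2 : ℝ) : ℂ))

/-- Quantum evolution `e^{-(it/ℏ)H_α} ψ` via the eigenfunction expansion. -/
def qEvol (ℏ m α t : ℝ) (ψ : ℝ → ℂ) (x : ℝ) : ℂ :=
  (∫ k : ℝ, Complex.exp (-(Complex.I) * (ℏ : ℂ) * (t : ℂ) * (k : ℂ) ^ 2 / (2 * (m : ℂ))) *
      phiP ℏ m α k x * (∫ y : ℝ, (starRingEnd ℂ) (phiP ℏ m α k y) * ψ y)) +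
    ((heav (-α) : ℝ) : ℂ) *
      Complex.exp (-(Complex.I) * (t : ℂ) / (ℏ : ℂ) * ((-(m * α ^ 2) / (2 * ℏ ^ 2) : ℝ) : ℂ)) *
      phiB ℏ m α x * (∫ y : ℝ, phiB ℏ m α y * ψ y)

/-- Classical perturbed evolution `e^{itL_β}` acting on functions of `(q,p)`. -/
def cEvol (m β t : ℝ) (f : ℝ → ℝ → ℂ) (q p : ℝ) : ℂ :=
  f (q + p * t / m) p -
    ((heav (-(t * q * p)) * heav (|p * t| / m - |q|) : ℝ) : ℂ) /
      (1 - (Real.sign t : ℂ) * 2 * Complex.I * ((|p| : ℝ) : ℂ) / ((m : ℂ) * (β : ℂ))) *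
      (f (q + p * t / m) p + f (-(q + p * t / m)) (-p))

end

theorem coh_neg (ℏ : ℝ) (σ σ' : ℂ) (q p x : ℝ) :
    coh ℏ σ σ' (-q) (-p) x = coh ℏ σ σ' q p (-x) := by
  unfold coh
  congr 2
  push_cast
  ring

theorem heav_congr {a b : ℝ} (h : 0 < a ↔ 0 < b) : heav a = heav b := by
  unfold heav
  simp only [h]

theorem heav_pos {a : ℝ} (h : 0 < a) : heav a = 1 := if_pos h

theorem heav_nonpos {a : ℝ} (h : a ≤ 0) : heav a = 0 := if_neg (not_lt.mpr h)

theorem cond_abs {m t q p : ℝ} (hm : 0 < m) (hp : p ≠ 0) :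
    0 < |p * t| / m - |q| ↔ m * |q * p| < p ^ 2 * |t| := by
  have hp' : 0 < |p| := abs_pos.mpr hp
  rw [sub_pos, lt_div_iff₀ hm, abs_mul, abs_mul, ← sq_abs p]
  constructor
  · intro h
    nlinarith
  · intro h
    by_contra! h'
    nlinarith

theorem cond_div {m t q p : ℝ} (hp : p ≠ 0) :
    0 < t + m * q / p ↔ 0 < p ^ 2 * t + m * (q * p) := by
  have hp' : 0 < p ^ 2 := by positivity
  have : p ^ 2 * t + m * (q * p) = p ^ 2 * (t + m * q / p) := by
    field_simp
  rw [this, mul_pos_iff_of_pos_left hp']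

theorem cond_div' {m t q p : ℝ} (hp : p ≠ 0) :
    0 < -t - m * q / p ↔ 0 < -(p ^ 2 * t + m * (q * p)) := by
  have hp' : 0 < p ^ 2 := by positivity
  have : -(p ^ 2 * t + m * (q * p)) = p ^ 2 * (-t - m * q / p) := by
    field_simp
    ring
  rw [this, mul_pos_iff_of_pos_left hp']

theorem coeff_eq (ℏ m α t q p : ℝ) (hℏ : 0 < ℏ) (hm : 0 < m) (hα : α ≠ 0)
    (hqp : q * p ≠ 0) :
    -(((heav (-(t * q * p)) * heav (|p * t| / m - |q|) : ℝ) : ℂ) /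
      (1 - (Real.sign t : ℂ) * 2 * Complex.I * ((|p| : ℝ) : ℂ) /
        ((m : ℂ) * ((2 * α / ℏ : ℝ) : ℂ)))) =
    ((heav (-(q * p)) : ℝ) : ℂ) * ((heav (t + m * q / p) : ℝ) : ℂ) * Rpm ℏ m α (-1) (p / ℏ) +
    ((heav (q * p) : ℝ) : ℂ) * ((heav (-t - m * q / p) : ℝ) : ℂ) * Rpm ℏ m α 1 (p / ℏ) := by
  have hp : p ≠ 0 := right_ne_zero_of_mul hqp
  have hp2 : 0 < p ^ 2 := by positivity
  have hℏc : (ℏ : ℂ) ≠ 0 := by exact_mod_cast hℏ.ne'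
  have hmc : (m : ℂ) ≠ 0 := by exact_mod_cast hm.ne'
  have hαc : (α : ℂ) ≠ 0 := by exact_mod_cast hα
  have hR : ∀ s : ℝ, Rpm ℏ m α (-s) (p / ℏ) =
      -(1 - (s : ℂ) * 2 * Complex.I * ((|p| : ℝ) : ℂ) /
        ((m : ℂ) * ((2 * α / ℏ : ℝ) : ℂ)))⁻¹ := by
    intro s
    unfold Rpm
    rw [abs_div, abs_of_pos hℏ]
    congr 2
    push_cast
    field_simp
    ring
  have hR1 := hR 1
  have hR2 := hR (-1)
  rw [neg_neg] at hR2
  rw [heav_congr (cond_div (m := m) (t := t) (q := q) hp),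
    heav_congr (cond_div' (m := m) (t := t) (q := q) hp),
    heav_congr (a := |p * t| / m - |q|) (b := p ^ 2 * |t| - m * |q * p|)
      ((cond_abs hm hp).trans sub_pos.symm), hR1, hR2, mul_assoc t q p]
  clear hR1 hR2 hR
  generalize q * p = u at *
  rcases lt_trichotomy t 0 with ht | ht | ht
  · rw [Real.sign_of_neg ht, abs_of_neg ht]
    have h2t : p ^ 2 * t < 0 := mul_neg_of_pos_of_neg hp2 ht
    rcases lt_or_gt_of_ne hqp with hu | hu
    · have hmu : m * u < 0 := mul_neg_of_pos_of_neg hm hu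
      rw [heav_nonpos (a := -(t * u)) (by nlinarith), heav_nonpos (a := u) hu.le,
        heav_nonpos (a := p ^ 2 * t + m * u) (by linarith)]
      simp
    · rw [heav_pos (a := -(t * u)) (by nlinarith), heav_pos (a := u) hu,
        heav_nonpos (a := -u) (by linarith), abs_of_pos hu,
        show p ^ 2 * -t - m * u = -(p ^ 2 * t + m * u) by ring]
      push_cast
      ring
  · subst ht
    rcases lt_or_gt_of_ne hqp with hu | hu
    · have hmu : m * u < 0 := mul_neg_of_pos_of_neg hm hu
      rw [heav_nonpos (a := -(0 * u)) (by simp), heav_nonpos (a := u) hu.le,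
        heav_nonpos (a := p ^ 2 * 0 + m * u) (by linarith)]
      simp
    · have hmu : 0 < m * u := mul_pos hm hu
      rw [heav_nonpos (a := -(0 * u)) (by simp), heav_nonpos (a := -u) (by linarith),
        heav_nonpos (a := -(p ^ 2 * 0 + m * u)) (by linarith)]
      simp
  · rw [Real.sign_of_pos ht, abs_of_pos ht]
    have h2t : 0 < p ^ 2 * t := mul_pos hp2 ht
    rcases lt_or_gt_of_ne hqp with hu | hu
    · rw [heav_pos (a := -(t * u)) (by nlinarith), heav_nonpos (a := u) hu.le,
        heav_pos (a := -u) (by linarith), abs_of_neg hu,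
        show p ^ 2 * t - m * -u = p ^ 2 * t + m * u by ring]
      push_cast
      ring
    · have hmu : 0 < m * u := mul_pos hm hu
      rw [heav_nonpos (a := -(t * u)) (by nlinarith), heav_nonpos (a := -u) (by linarith),
        heav_nonpos (a := -(p ^ 2 * t + m * u)) (by linarith)]
      simp

/-- Proposition 3.10 of the paper: explicit formula for the semiclassical
evolution `e^{(i/ℏ)A_t}(e^{itL_β}φ^ℏ_{σ_t,x})(ξ)` in terms of the free quantum evolution of the
coherent state and the reflection/transmission coefficients `R_±(p/ℏ)`. -/
theorem statement19 (ℏ m σ₀ α : ℝ) (hℏ : 0 < ℏ) (hm : 0 < m) (hσ₀ : 0 < σ₀) (hα : α ≠ 0) :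
    ∀ t x q p : ℝ, q * p ≠ 0 →
      Complex.exp (Complex.I / (ℏ : ℂ) * ((p ^ 2 * t / (2 * m) : ℝ) : ℂ)) *
        cEvol m (2 * α / ℏ) t
          (fun q' p' =>
            coh ℏ ((σ₀ : ℂ) + Complex.I * (t : ℂ) / ((2 * m * σ₀ : ℝ) : ℂ))
              ((σ₀ : ℂ))⁻¹ q' p' x) q p =
      (Complex.exp (Complex.I / (ℏ : ℂ) * ((p ^ 2 * t / (2 * m) : ℝ) : ℂ)) *
          coh ℏ ((σ₀ : ℂ) + Complex.I * (t : ℂ) / ((2 * m * σ₀ : ℝ) : ℂ)) ((σ₀ : ℂ))⁻¹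
            (q + p * t / m) p x) +
      ((heav (-(q * p)) : ℝ) : ℂ) * ((heav (t + m * q / p) : ℝ) : ℂ) * Rpm ℏ m α (-1) (p / ℏ) *
        (Complex.exp (Complex.I / (ℏ : ℂ) * ((p ^ 2 * t / (2 * m) : ℝ) : ℂ)) *
            coh ℏ ((σ₀ : ℂ) + Complex.I * (t : ℂ) / ((2 * m * σ₀ : ℝ) : ℂ)) ((σ₀ : ℂ))⁻¹
              (q + p * t / m) p x +
          Complex.exp (Complex.I / (ℏ : ℂ) * ((p ^ 2 * t / (2 * m) : ℝ) : ℂ)) *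
            coh ℏ ((σ₀ : ℂ) + Complex.I * (t : ℂ) / ((2 * m * σ₀ : ℝ) : ℂ)) ((σ₀ : ℂ))⁻¹
              (q + p * t / m) p (-x)) +
      ((heav (q * p) : ℝ) : ℂ) * ((heav (-t - m * q / p) : ℝ) : ℂ) * Rpm ℏ m α 1 (p / ℏ) *
        (Complex.exp (Complex.I / (ℏ : ℂ) * ((p ^ 2 * t / (2 * m) : ℝ) : ℂ)) *
            coh ℏ ((σ₀ : ℂ) + Complex.I * (t : ℂ) / ((2 * m * σ₀ : ℝ) : ℂ)) ((σ₀ : ℂ))⁻¹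
              (q + p * t / m) p x +
          Complex.exp (Complex.I / (ℏ : ℂ) * ((p ^ 2 * t / (2 * m) : ℝ) : ℂ)) *
            coh ℏ ((σ₀ : ℂ) + Complex.I * (t : ℂ) / ((2 * m * σ₀ : ℝ) : ℂ)) ((σ₀ : ℂ))⁻¹
              (q + p * t / m) p (-x)) := by
  intro t x q p hqp
  have h := coeff_eq ℏ m α t q p hℏ hm hα hqp
  unfold cEvol
  simp only [coh_neg]
  generalize coh ℏ _ _ _ _ x = A
  generalize coh ℏ _ _ _ _ (-x) = B
  generalize Complex.exp _ = E
  linear_combination E * (A + B) * h
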